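/- Every holomorphic function f : D → ℂ that is invariant under the action of Γ(K,U), i.e. f((a,b)·z) = f(z) for all (a,b) ∈ Γ(K,U) and all z ∈ D, is constant. (Equivalently, dim H^{0,0}(X(K,U)) = 1: the only global holomorphic functions on an Oeljeklaus–Toma manifold are the constants.) -/

import Mathlib

/-!
The translations by `𝒪_K` alone force an invariant holomorphic function to be constant.

The image of `𝒪_K` under `(σ₁, …, σ_{s+t})` is a cocompact subgroup of `ℝˢ × ℂᵗ`
(`exists_near_ringOfIntegers`). Hence for fixed imaginary parts of `z₁, …, z_s` the function `f`
takes all its values on a compact set, so on every complex line in a direction `v ∈ 0 × ℂᵗ` it is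
a bounded entire function, and Liouville's theorem shows that `f` does not depend on
`z_{s+1}, …, z_{s+t}` (`eq_add_of_vertical`).

As `t > 0`, Minkowski's theorem provides nonzero `a ∈ 𝒪_K` with `σ₁(a), …, σ_s(a)` arbitrarily
small (`exists_small_ringOfIntegers`); multiplying the cocompact image of `𝒪_K` by such an `a`
shows that `𝒪_K` has dense image in `ℝˢ` (`exists_approx_real`). By continuity `f` is therefore
invariant under all translations by `ℝˢ × ℂᵗ` (`eq_add_of_real`). These directions span `ℂ^{s+t}`
over `ℂ`, so the complex derivative of `f` vanishes on the convex open set `D`.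
-/

open NumberField

noncomputable section

variable (K : Type) [Field K] [NumberField K] (U : Subgroup (𝓞 K)ˣ)
variable (s t : ℕ) (σ : Fin (s + 2 * t) → (K →+* ℂ))

/-- The logarithm map `ℓ : U → ℝˢ`, `ℓ(u) = (log σ₁(u), …, log σ_s(u))`. -/
def ell : ↥U → (Fin s → ℝ) := fun u i =>
  Real.log ((σ (Fin.castLE (by omega) i) (algebraMap (𝓞 K) K ((u : (𝓞 K)ˣ) : 𝓞 K))).re)

/-- The value `σ_i(u)` of the `i`-th embedding at a unit `u ∈ U`. -/
def embVal (u : ↥U) (i : Fin (s + 2 * t)) : ℂ :=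
  σ i (algebraMap (𝓞 K) K ((u : (𝓞 K)ˣ) : 𝓞 K))

/-- The universal cover `D = Hˢ × ℂᵗ ⊆ ℂ^{s+t}` of the Oeljeklaus–Toma manifold. -/
def OTdomain : Set (Fin (s + t) → ℂ) := {z | ∀ i : Fin (s + t), (i : ℕ) < s → 0 < (z i).im}

/-- The affine action of `(a, b) ∈ Γ(K,U) = U ⋉ 𝒪_K` on `D`:
`(a,b)·z = (σ₁(a)z₁+σ₁(b), …, σ_{s+t}(a)z_{s+t}+σ_{s+t}(b))`. -/
def OTact (a : (𝓞 K)ˣ) (b : 𝓞 K) (z : Fin (s + t) → ℂ) : Fin (s + t) → ℂ := fun i =>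
  σ (Fin.castLE (by omega) i) (algebraMap (𝓞 K) K (a : 𝓞 K)) * z i +
    σ (Fin.castLE (by omega) i) (algebraMap (𝓞 K) K b)

/-- The vector `(σ₁(b), …, σ_{s+t}(b))` by which `b ∈ 𝒪_K` translates `D`. -/
def translationVec (b : 𝓞 K) : Fin (s + t) → ℂ := fun i =>
  σ (Fin.castLE (by omega) i) (algebraMap (𝓞 K) K b)

lemma index_lt {k : ℕ} (hk : k < t) : s + k < s + 2 * t := by omega

lemma conjIndex_lt {k : ℕ} (hk : k < t) : s + t + k < s + 2 * t := by omega

/-- Cocompactness of `𝒪_K` in `ℝˢ × ℂᵗ`. A vector is expanded in an integral basis, which is a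
`ℂ`-basis of `ℂ^{Hom(K, ℂ)}`; invariance under conjugation makes the coefficients real, and one
rounds them down. -/
lemma exists_near_ringOfIntegers
    (hdeg : Module.finrank ℚ K = s + 2 * t)
    (hσinj : Function.Injective σ)
    (hreal : ∀ i : Fin (s + 2 * t), (i : ℕ) < s → ∀ x : K, (σ i x).im = 0)
    (hconj : ∀ k : ℕ, ∀ hk : k < t, ∀ x : K,
      σ ⟨s + t + k, conjIndex_lt s t hk⟩ x = (starRingEnd ℂ) (σ ⟨s + k, index_lt s t hk⟩ x)) :
    ∃ C : ℝ, ∀ T : Fin (s + t) → ℂ, (∀ i : Fin (s + t), (i : ℕ) < s → (T i).im = 0) →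
      ∃ b : 𝓞 K, ∀ i, ‖T i - translationVec K s t σ b i‖ ≤ C := by
  classical
  let β : Module.Free.ChooseBasisIndex ℤ (𝓞 K) → K := fun k => integralBasis K k
  have hβ : ∀ k, β k = algebraMap (𝓞 K) K (RingOfIntegers.basis K k) := integralBasis_apply K
  have hbij : Function.Bijective σ := by
    rw [Fintype.bijective_iff_injective_and_card]
    exact ⟨hσinj, by rw [Fintype.card_fin, NumberField.Embeddings.card, hdeg]⟩
  refine ⟨∑ j, ∑ k, ‖σ j (β k)‖, fun T hT => ?_⟩
  -- the conjugation-symmetric extension of `T` to all `s + 2t` embeddings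
  let T' : Fin (s + 2 * t) → ℂ := fun j =>
    if h : (j : ℕ) < s + t then T ⟨j, h⟩ else (starRingEnd ℂ) (T ⟨j - t, by omega⟩)
  obtain ⟨c, hc⟩ : ∃ c : Module.Free.ChooseBasisIndex ℤ (𝓞 K) → ℂ,
      ∀ j, ∑ k, c k * σ j (β k) = T' j := by
    let V : (K →+* ℂ) → ℂ := fun φ => T' ((Equiv.ofBijective σ hbij).symm φ)
    refine ⟨(canonicalEmbedding.latticeBasis K).repr V, fun j => ?_⟩
    have h := congrFun ((canonicalEmbedding.latticeBasis K).sum_repr V) (σ j)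
    have hV : V (σ j) = T' j := congrArg T' ((Equiv.ofBijective σ hbij).symm_apply_apply j)
    rw [← hV, ← h, Finset.sum_apply]
    refine Finset.sum_congr rfl fun k _ => ?_
    rw [canonicalEmbedding.latticeBasis_apply, Pi.smul_apply, canonicalEmbedding.apply_at,
      smul_eq_mul]
  have hc1 : ∀ i : Fin (s + t), ∑ k, c k * σ (Fin.castLE (by omega) i) (β k) = T i := by
    intro i
    rw [hc]
    simp [T']
  have hc2 : ∀ i : Fin (s + t),
      ∑ k, (starRingEnd ℂ) (c k) * σ (Fin.castLE (by omega) i) (β k) = T i := by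
    intro i
    by_cases hi : (i : ℕ) < s
    · have h := congrArg (starRingEnd ℂ) (hc1 i)
      rw [map_sum, Complex.conj_eq_iff_im.2 (hT i hi)] at h
      rw [← h]
      refine Finset.sum_congr rfl fun k _ => ?_
      rw [map_mul, Complex.conj_eq_iff_im.2 (hreal (Fin.castLE (by omega) i) hi (β k))]
    · have hk : (i : ℕ) - s < t := by omega
      have h := congrArg (starRingEnd ℂ) (hc ⟨s + t + (i - s), by omega⟩)
      have e1 : (starRingEnd ℂ) (T' ⟨s + t + (i - s), by omega⟩) = T i := by
        have h1 : ¬ (s + t + ((i : ℕ) - s) < s + t) := by omega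
        simp only [T', h1, dite_false, Complex.conj_conj]
        congr 1
        ext
        simp only
        omega
      rw [e1, map_sum] at h
      rw [← h]
      refine Finset.sum_congr rfl fun k _ => ?_
      rw [map_mul, hconj _ hk, Complex.conj_conj]
      congr 3
      ext
      simp only [Fin.val_castLE]
      omega
  have hc3 : ∀ i : Fin (s + t),
      ∑ k, ((c k).re : ℂ) * σ (Fin.castLE (by omega) i) (β k) = T i := by
    intro i
    have h : ∀ k, ((c k).re : ℂ) = (c k + (starRingEnd ℂ) (c k)) / 2 := fun k =>
      Complex.re_eq_add_conj (c k)
    calc _ = (∑ k, c k * σ (Fin.castLE (by omega) i) (β k) +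
          ∑ k, (starRingEnd ℂ) (c k) * σ (Fin.castLE (by omega) i) (β k)) / 2 := by
          rw [← Finset.sum_add_distrib, Finset.sum_div]
          refine Finset.sum_congr rfl fun k _ => ?_
          rw [h]
          ring
      _ = T i := by rw [hc1, hc2]; ring
  refine ⟨∑ k, ⌊(c k).re⌋ • RingOfIntegers.basis K k, fun i => ?_⟩
  have hb : translationVec K s t σ (∑ k, ⌊(c k).re⌋ • RingOfIntegers.basis K k) i =
      ∑ k, (⌊(c k).re⌋ : ℂ) * σ (Fin.castLE (by omega) i) (β k) := by
    simp only [translationVec, map_sum, hβ]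
    refine Finset.sum_congr rfl fun k _ => ?_
    rw [zsmul_eq_mul, map_mul, map_mul, map_intCast, map_intCast]
  rw [hb, ← hc3 i, ← Finset.sum_sub_distrib]
  have hround : ∀ k, ‖((c k).re : ℂ) * σ (Fin.castLE (by omega) i) (β k) -
      (⌊(c k).re⌋ : ℂ) * σ (Fin.castLE (by omega) i) (β k)‖ ≤
      ‖σ (Fin.castLE (by omega) i) (β k)‖ := by
    intro k
    rw [← sub_mul, norm_mul]
    refine mul_le_of_le_one_left (norm_nonneg _) ?_
    have : (((c k).re : ℂ) - (⌊(c k).re⌋ : ℂ)) = ((Int.fract (c k).re : ℝ) : ℂ) := by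
      rw [Int.fract]; push_cast; rfl
    rw [this, Complex.norm_real, Real.norm_eq_abs, Int.abs_fract]
    exact (Int.fract_lt_one _).le
  refine (norm_sum_le_of_le _ fun k _ => hround k).trans ?_
  exact Finset.single_le_sum (f := fun j => ∑ k, ‖σ j (β k)‖)
    (fun j _ => Finset.sum_nonneg fun k _ => norm_nonneg _)
    (Finset.mem_univ (Fin.castLE (by omega) i))

/-- Minkowski's theorem, with the size constraint relaxed at the complex place of `σ_{s+1}`. -/
lemma exists_small_ringOfIntegers (ht : 0 < t)
    (hσinj : Function.Injective σ)
    (hreal : ∀ i : Fin (s + 2 * t), (i : ℕ) < s → ∀ x : K, (σ i x).im = 0)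
    {δ : ℝ} (hδ : 0 < δ) :
    ∃ a : 𝓞 K, a ≠ 0 ∧ ∀ i : Fin (s + 2 * t), (i : ℕ) < s →
      ‖σ i (algebraMap (𝓞 K) K a)‖ < δ := by
  classical
  let w₁ : InfinitePlace K := InfinitePlace.mk (σ ⟨s, by omega⟩)
  lift δ to NNReal using hδ.le
  have hδ' : δ ≠ 0 := by rintro rfl; simp at hδ
  obtain ⟨B, hB⟩ : ∃ B : NNReal, mixedEmbedding.minkowskiBound K 1 < B :=
    ⟨(mixedEmbedding.minkowskiBound K 1).toNNReal + 1, by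
      conv_lhs => rw [← ENNReal.coe_toNNReal (mixedEmbedding.minkowskiBound_lt_top K 1).ne]
      exact_mod_cast lt_add_one _⟩
  obtain ⟨g, hg, hgB⟩ := mixedEmbedding.adjust_f K (w₁ := w₁) (f := fun _ => δ) B
    (fun _ _ => hδ')
  have hvol : mixedEmbedding.minkowskiBound K 1 <
      MeasureTheory.volume (mixedEmbedding.convexBodyLT K g) := by
    rw [mixedEmbedding.convexBodyLT_volume]
    refine hB.trans_le ?_
    rw [hgB]
    exact_mod_cast le_mul_of_one_le_left zero_le (mixedEmbedding.one_le_convexBodyLTFactor K)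
  obtain ⟨a, ha, hlt⟩ := mixedEmbedding.exists_ne_zero_mem_ringOfIntegers_lt K hvol
  refine ⟨a, ha, fun i hi => ?_⟩
  have hne : InfinitePlace.mk (σ i) ≠ w₁ := by
    intro h
    have hne' : σ i ≠ σ ⟨s, by omega⟩ := fun h => by
      have := congrArg Fin.val (hσinj h)
      simp only at this
      omega
    rcases InfinitePlace.mk_eq_iff.1 h with h | h
    · exact hne' h
    · refine hne' (RingHom.ext fun x => ?_)
      rw [← h, ComplexEmbedding.conjugate_coe_eq, Complex.conj_eq_iff_im.2 (hreal i hi x)]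
  have := hlt (InfinitePlace.mk (σ i))
  rw [hg _ hne] at this
  simpa using this

/-- Density of `𝒪_K` in `ℝˢ`; only the first `s` coordinates of `r` play a role. -/
lemma exists_approx_real (ht : 0 < t)
    (hdeg : Module.finrank ℚ K = s + 2 * t)
    (hσinj : Function.Injective σ)
    (hreal : ∀ i : Fin (s + 2 * t), (i : ℕ) < s → ∀ x : K, (σ i x).im = 0)
    (hconj : ∀ k : ℕ, ∀ hk : k < t, ∀ x : K,
      σ ⟨s + t + k, conjIndex_lt s t hk⟩ x = (starRingEnd ℂ) (σ ⟨s + k, index_lt s t hk⟩ x))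
    (r : Fin (s + t) → ℂ) (hr : ∀ i : Fin (s + t), (i : ℕ) < s → (r i).im = 0)
    {ε : ℝ} (hε : 0 < ε) :
    ∃ b : 𝓞 K, ∀ i : Fin (s + t), (i : ℕ) < s → ‖r i - translationVec K s t σ b i‖ < ε := by
  obtain ⟨C, hC⟩ := exists_near_ringOfIntegers K s t σ hdeg hσinj hreal hconj
  obtain ⟨a, ha, hsmall⟩ := exists_small_ringOfIntegers K s t σ ht hσinj hreal
    (δ := ε / (|C| + 1)) (by positivity)
  have ha' : ∀ i, translationVec K s t σ a i ≠ 0 := fun i => by simpa [translationVec] using ha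
  -- approximate `r / a` with bounded error and multiply back by `a`
  obtain ⟨b, hb⟩ := hC (fun i => if (i : ℕ) < s then r i / translationVec K s t σ a i else 0) (by
    intro i hi
    have h1 := hreal (Fin.castLE (by omega) i) hi (algebraMap (𝓞 K) K a)
    have h2 : (translationVec K s t σ a i).im = 0 := h1
    simp [hi, Complex.div_im, hr i hi, h2])
  refine ⟨a * b, fun i hi => ?_⟩
  have hbi := hb i
  simp only [hi, if_true] at hbi
  have e : r i - translationVec K s t σ (a * b) i = translationVec K s t σ a i *
      (r i / translationVec K s t σ a i - translationVec K s t σ b i) := by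
    rw [mul_sub, mul_div_cancel₀ _ (ha' i)]
    simp [translationVec]
  have hai : ‖translationVec K s t σ a i‖ < ε / (|C| + 1) := hsmall (Fin.castLE (by omega) i) hi
  rw [e, norm_mul]
  calc _ ≤ ‖translationVec K s t σ a i‖ * (|C| + 1) := by
        gcongr
        linarith [le_abs_self C]
    _ < ε / (|C| + 1) * (|C| + 1) := by gcongr
    _ = ε := by field_simp

lemma isOpen_OTdomain : IsOpen (OTdomain s t) := by
  have : OTdomain s t = ⋂ i : Fin (s + t), {z | (i : ℕ) < s → 0 < (z i).im} := by
    ext z; simp [OTdomain]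
  rw [this]
  refine isOpen_iInter_of_finite fun i => ?_
  by_cases hi : (i : ℕ) < s
  · simp only [hi, true_imp_iff]
    exact isOpen_lt continuous_const (Complex.continuous_im.comp (continuous_apply i))
  · simp [hi]

lemma convex_OTdomain : Convex ℝ (OTdomain s t) := by
  intro z hz w hw a b ha hb hab i hi
  have h1 := hz i hi
  have h2 := hw i hi
  simp only [Pi.add_apply, Pi.smul_apply, Complex.add_im, Complex.real_smul, Complex.mul_im,
    Complex.ofReal_re, Complex.ofReal_im, zero_mul, add_zero]
  rcases ha.eq_or_lt with rfl | ha
  · have : b = 1 := by linarith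
    subst this
    simpa using h2
  · have := mul_pos ha h1
    have := mul_nonneg hb h2.le
    linarith

lemma add_mem_OTdomain {z v : Fin (s + t) → ℂ} (hz : z ∈ OTdomain s t)
    (hv : ∀ i : Fin (s + t), (i : ℕ) < s → (v i).im = 0) : z + v ∈ OTdomain s t := by
  intro i hi
  have := hz i hi
  simpa [hv i hi] using this

/-- An invariant holomorphic function is constant in the directions `0 × ℂᵗ`, by Liouville. -/
lemma eq_add_of_vertical
    (hdeg : Module.finrank ℚ K = s + 2 * t)
    (hσinj : Function.Injective σ)
    (hreal : ∀ i : Fin (s + 2 * t), (i : ℕ) < s → ∀ x : K, (σ i x).im = 0)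
    (hconj : ∀ k : ℕ, ∀ hk : k < t, ∀ x : K,
      σ ⟨s + t + k, conjIndex_lt s t hk⟩ x = (starRingEnd ℂ) (σ ⟨s + k, index_lt s t hk⟩ x))
    {f : (Fin (s + t) → ℂ) → ℂ}
    (hf : DifferentiableOn ℂ f (OTdomain s t))
    (hinv : ∀ b : 𝓞 K, ∀ z ∈ OTdomain s t, f (z + translationVec K s t σ b) = f z)
    {z : Fin (s + t) → ℂ} (hz : z ∈ OTdomain s t)
    {v : Fin (s + t) → ℂ} (hv : ∀ i : Fin (s + t), (i : ℕ) < s → v i = 0) :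
    f (z + v) = f z := by
  obtain ⟨C, hC⟩ := exists_near_ringOfIntegers K s t σ hdeg hσinj hreal hconj
  have hline : ∀ c : ℂ, z + c • v ∈ OTdomain s t := fun c =>
    add_mem_OTdomain s t hz fun i hi => by simp [hv i hi]
  let Q : Set (Fin (s + t) → ℂ) :=
    Metric.closedBall z (max C 0) ∩ {x | ∀ i : Fin (s + t), (i : ℕ) < s → (x i).im = (z i).im}
  have hQD : Q ⊆ OTdomain s t := fun x hx i hi => by rw [hx.2 i hi]; exact hz i hi
  have hQ : IsCompact Q := by
    refine (isCompact_closedBall _ _).inter_right ?_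
    simp only [Set.ofPred_forall]
    exact isClosed_iInter fun i => isClosed_iInter fun _ =>
      isClosed_eq (Complex.continuous_im.comp (continuous_apply i)) continuous_const
  have hbdd : Bornology.IsBounded (Set.range fun c : ℂ => f (z + c • v)) := by
    refine ((hQ.image_of_continuousOn (hf.continuousOn.mono hQD)).isBounded).subset ?_
    rintro _ ⟨c, rfl⟩
    obtain ⟨b, hb⟩ := hC (c • v) fun i hi => by simp [hv i hi]
    have hmem : z + (c • v - translationVec K s t σ b) ∈ Q := by
      refine ⟨?_, fun i hi => ?_⟩
      · rw [mem_closedBall_iff_norm, add_sub_cancel_left, pi_norm_le_iff_of_nonneg (le_max_right _ _)]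
        exact fun i => (hb i).trans (le_max_left _ _)
      · have h1 : (translationVec K s t σ b i).im = 0 := hreal (Fin.castLE (by omega) i) hi _
        simp [hv i hi, h1]
    refine ⟨_, hmem, ?_⟩
    rw [← hinv b _ (hQD hmem)]
    congr 1
    abel
  have hdiff : Differentiable ℂ fun c : ℂ => f (z + c • v) := fun c =>
    DifferentiableAt.comp c (hf.differentiableAt ((isOpen_OTdomain s t).mem_nhds (hline c)))
      (by fun_prop)
  simpa using hdiff.apply_eq_apply_of_bounded hbdd 1 0

/-- An invariant holomorphic function is invariant under all translations by `ℝˢ × ℂᵗ`. -/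
lemma eq_add_of_real (ht : 0 < t)
    (hdeg : Module.finrank ℚ K = s + 2 * t)
    (hσinj : Function.Injective σ)
    (hreal : ∀ i : Fin (s + 2 * t), (i : ℕ) < s → ∀ x : K, (σ i x).im = 0)
    (hconj : ∀ k : ℕ, ∀ hk : k < t, ∀ x : K,
      σ ⟨s + t + k, conjIndex_lt s t hk⟩ x = (starRingEnd ℂ) (σ ⟨s + k, index_lt s t hk⟩ x))
    {f : (Fin (s + t) → ℂ) → ℂ}
    (hf : DifferentiableOn ℂ f (OTdomain s t))
    (hinv : ∀ b : 𝓞 K, ∀ z ∈ OTdomain s t, f (z + translationVec K s t σ b) = f z)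
    {z : Fin (s + t) → ℂ} (hz : z ∈ OTdomain s t)
    {v : Fin (s + t) → ℂ} (hv : ∀ i : Fin (s + t), (i : ℕ) < s → (v i).im = 0) :
    f (z + v) = f z := by
  have hzv := add_mem_OTdomain s t hz hv
  have hcont : ContinuousAt f (z + v) :=
    hf.continuousOn.continuousAt ((isOpen_OTdomain s t).mem_nhds hzv)
  refine eq_of_forall_dist_le fun η hη => ?_
  obtain ⟨ε, hε, hball⟩ := Metric.continuousAt_iff.1 hcont η hη
  obtain ⟨b, hb⟩ := exists_approx_real K s t σ ht hdeg hσinj hreal hconj v hv hε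
  -- `x` agrees with the lattice translate of `z` in the first `s` coordinates, with `z + v`
  -- in the others
  let x : Fin (s + t) → ℂ := fun i =>
    if (i : ℕ) < s then z i + translationVec K s t σ b i else z i + v i
  have hbreal : ∀ i : Fin (s + t), (i : ℕ) < s → (translationVec K s t σ b i).im = 0 :=
    fun i hi => hreal (Fin.castLE (by omega) i) hi _
  have hx : f x = f z := by
    rw [← hinv b z hz]
    have := eq_add_of_vertical K s t σ hdeg hσinj hreal hconj hf hinv
      (add_mem_OTdomain s t hz hbreal) (v := x - (z + translationVec K s t σ b))
      (fun i hi => by simp [x, hi])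
    rwa [add_sub_cancel] at this
  have hd : dist x (z + v) < ε := by
    rw [dist_pi_lt_iff hε]
    intro i
    by_cases hi : (i : ℕ) < s
    · rw [dist_comm, dist_eq_norm]
      simpa [x, hi] using hb i hi
    · simpa [x, hi] using hε
  rw [dist_comm, ← hx]
  exact (hball hd).le

/--
`dim H^{0,0}(X(K,U)) = 1`: every holomorphic function on `D = Hˢ × ℂᵗ` invariant under the
action of `Γ(K,U) = U ⋉ 𝒪_K` is constant; the only global holomorphic functions on an
Oeljeklaus–Toma manifold are the constants. -/
theorem OT_invariant_holomorphic_constant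
    (hs : 0 < s) (ht : 0 < t)
    (hdeg : Module.finrank ℚ K = s + 2 * t)
    (hσinj : Function.Injective σ)
    (hreal : ∀ i : Fin (s + 2 * t), (i : ℕ) < s → ∀ x : K, (σ i x).im = 0)
    (hnonreal : ∀ i : Fin (s + 2 * t), s ≤ (i : ℕ) → ∃ x : K, (σ i x).im ≠ 0)
    (hconj : ∀ k : ℕ, ∀ hk : k < t, ∀ x : K,
      σ ⟨s + t + k, by omega⟩ x = (starRingEnd ℂ) (σ ⟨s + k, by omega⟩ x))
    (hUpos : ∀ u ∈ U, ∀ i : Fin (s + 2 * t), (i : ℕ) < s →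
      0 < (σ i (algebraMap (𝓞 K) K (u : (𝓞 K)ˣ))).re)
    (hellinj : Function.Injective (ell K U s t σ))
    (hdisc : DiscreteTopology (AddSubgroup.closure (Set.range (ell K U s t σ))))
    (hspan : Submodule.span ℝ (Set.range (ell K U s t σ)) = ⊤)
    (f : (Fin (s + t) → ℂ) → ℂ)
    (hf : DifferentiableOn ℂ f (OTdomain s t))
    (hinv : ∀ (a : ↥U) (b : 𝓞 K), ∀ z ∈ OTdomain s t,
      f (OTact K s t σ (a : (𝓞 K)ˣ) b z) = f z) :
    ∀ z ∈ OTdomain s t, ∀ w ∈ OTdomain s t, f z = f w := by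
  have hinv' : ∀ b : 𝓞 K, ∀ z ∈ OTdomain s t, f (z + translationVec K s t σ b) = f z := by
    intro b z hz
    rw [← hinv 1 b z hz]
    congr 1
    ext i
    simp [OTact, translationVec]
  intro z hz w hw
  refine (isOpen_OTdomain s t).is_const_of_fderiv_eq_zero
    (convex_OTdomain s t).isPreconnected hf (fun x hx => ?_) hz hw
  have hdx : DifferentiableAt ℂ f x := hf.differentiableAt ((isOpen_OTdomain s t).mem_nhds hx)
  have hzero : ∀ v : Fin (s + t) → ℂ, (∀ i : Fin (s + t), (i : ℕ) < s → (v i).im = 0) →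
      fderiv ℂ f x v = 0 := by
    intro v hv
    -- along a direction in `ℝˢ × ℂᵗ` only the real line is available, hence the real derivative
    have h1 : HasLineDerivAt ℝ f (fderiv ℂ f x v) x v :=
      (hdx.hasFDerivAt.restrictScalars ℝ).hasLineDerivAt v
    have h2 : (fun c : ℝ => f (x + c • v)) = fun _ => f x := funext fun c =>
      eq_add_of_real K s t σ ht hdeg hσinj hreal hconj hf hinv' hx
        fun i hi => by simp [hv i hi]
    unfold HasLineDerivAt at h1
    rw [h2] at h1
    exact h1.unique (hasDerivAt_const _ _)
  ext v
  have hv : v = (fun i => ((v i).re : ℂ)) + Complex.I • (fun i => ((v i).im : ℂ)) := by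
    ext i
    simp [mul_comm Complex.I, Complex.re_add_im]
  rw [hv, map_add, map_smul, hzero _ (by simp), hzero _ (by simp)]
  simp

end
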